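/- Let I be an instance with n ≥ 2 agents and n objects, and let p = (p_1,...,p_n) be given by p_j = n^{2n} + n^{2(n-j)} for all j ∈ [n]. Then a matching μ of G_I is max-cardinality rank-maximal if and only if μ is a priority-p matching. -/

import Mathlib

open Finset
open scoped Classical

/-- A one-sided matching instance with `n` agents and `n` objects.  Agent `i` has a
nonempty acceptable set `accept i` and a weak order `pref i` on it
(`pref i h h'` means agent `i` weakly prefers object `h` to object `h'`). -/
structure OSMInstance (n : ℕ) where
  accept : Fin n → Finset (Fin n)
  accept_nonempty : ∀ i, (accept i).Nonempty
  pref : Fin n → Fin n → Fin n → Prop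
  pref_refl : ∀ i h, h ∈ accept i → pref i h h
  pref_trans : ∀ i h₁ h₂ h₃, h₁ ∈ accept i → h₂ ∈ accept i → h₃ ∈ accept i →
    pref i h₁ h₂ → pref i h₂ h₃ → pref i h₁ h₃
  pref_total : ∀ i h₁ h₂, h₁ ∈ accept i → h₂ ∈ accept i → pref i h₁ h₂ ∨ pref i h₂ h₁

namespace OSMInstance

variable {n : ℕ}

/-- Agent `i` strictly prefers object `h` to object `h'`. -/
def strictPref (I : OSMInstance n) (i h h' : Fin n) : Prop :=
  I.pref i h h' ∧ ¬ I.pref i h' h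

/-- The rank of the edge `(i, h)` of `G_I`: one plus the number of acceptable objects
that agent `i` strictly prefers to `h`. -/
noncomputable def edgeRank (I : OSMInstance n) (e : Fin n × Fin n) : ℕ :=
  ((I.accept e.1).filter (fun h' => I.strictPref e.1 h' e.2)).card + 1

/-- A matching of `G_I`: a set of acceptable (agent, object) pairs in which every agent
and every object occurs at most once. -/
def IsMatching (I : OSMInstance n) (μ : Finset (Fin n × Fin n)) : Prop :=
  (∀ e ∈ μ, e.2 ∈ I.accept e.1) ∧
  (∀ e ∈ μ, ∀ e' ∈ μ, e.1 = e'.1 → e = e') ∧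
  (∀ e ∈ μ, ∀ e' ∈ μ, e.2 = e'.2 → e = e')

/-- Total weight of a set of edges under the edge weights `w`. -/
def weightSum (w : Fin n × Fin n → ℝ) (μ : Finset (Fin n × Fin n)) : ℝ :=
  ∑ e ∈ μ, w e

/-- Social welfare of the set of edges `μ` under the valuation profile `v`. -/
def SW (_I : OSMInstance n) (v : Fin n → Fin n → ℝ) (μ : Finset (Fin n × Fin n)) : ℝ :=
  ∑ e ∈ μ, v e.1 e.2

/-- `μ` is a maximum-weight matching of `G_I` with respect to edge weights `w`. -/
def IsMaxWeightMatching (I : OSMInstance n) (w : Fin n × Fin n → ℝ)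
    (μ : Finset (Fin n × Fin n)) : Prop :=
  I.IsMatching μ ∧ ∀ μ', I.IsMatching μ' → weightSum w μ' ≤ weightSum w μ

/-- `μ` is a priority-`p` matching: a maximum-weight matching when every rank-`r` edge
gets weight `p r`. -/
noncomputable def IsPriorityMatching (I : OSMInstance n) (p : ℕ → ℝ)
    (μ : Finset (Fin n × Fin n)) : Prop :=
  I.IsMaxWeightMatching (fun e => p (I.edgeRank e)) μ

/-- `v` is a valuation profile consistent with the instance: values lie in `[0,1]`,
unacceptable objects have value `0`, and on acceptable objects the values represent
the weak order. -/
def Consistent (I : OSMInstance n) (v : Fin n → Fin n → ℝ) : Prop :=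
  (∀ i h, 0 ≤ v i h ∧ v i h ≤ 1) ∧
  (∀ i h, h ∉ I.accept i → v i h = 0) ∧
  (∀ i h h', h ∈ I.accept i → h' ∈ I.accept i → (I.pref i h h' ↔ v i h' ≤ v i h))

/-- Unit-sum valuations: each agent's values over acceptable objects sum to `1`. -/
def UnitSum (I : OSMInstance n) (v : Fin n → Fin n → ℝ) : Prop :=
  ∀ i, ∑ h ∈ I.accept i, v i h = 1

/-- Unit-range valuations: each agent values some acceptable object `1`, some
acceptable object `0`, and has two non-equivalent acceptable objects. -/
def UnitRange (I : OSMInstance n) (v : Fin n → Fin n → ℝ) : Prop :=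
  ∀ i, (∃ h ∈ I.accept i, v i h = 1) ∧ (∃ h ∈ I.accept i, v i h = 0) ∧
    ∃ h ∈ I.accept i, ∃ h' ∈ I.accept i, I.strictPref i h h'

/-- Agent `i` is unmatched in `μ`. -/
def Unmatched (_I : OSMInstance n) (μ : Finset (Fin n × Fin n)) (i : Fin n) : Prop :=
  ∀ h, (i, h) ∉ μ

/-- Agent `i` weakly prefers their allocation in `μ'` to their allocation in `μ`
(being unmatched is strictly worse than receiving any acceptable object). -/
def WeakImprove (I : OSMInstance n) (μ' μ : Finset (Fin n × Fin n)) (i : Fin n) : Prop :=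
  I.Unmatched μ i ∨ ∃ h h', (i, h) ∈ μ ∧ (i, h') ∈ μ' ∧ I.pref i h' h

/-- Agent `i` strictly prefers their allocation in `μ'` to their allocation in `μ`. -/
def StrictImprove (I : OSMInstance n) (μ' μ : Finset (Fin n × Fin n)) (i : Fin n) : Prop :=
  (I.Unmatched μ i ∧ ∃ h', (i, h') ∈ μ') ∨
    ∃ h h', (i, h) ∈ μ ∧ (i, h') ∈ μ' ∧ I.strictPref i h' h

/-- `μ` is a Pareto optimal matching of `G_I`. -/
def ParetoOptimal (I : OSMInstance n) (μ : Finset (Fin n × Fin n)) : Prop :=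
  I.IsMatching μ ∧
    ¬ ∃ μ', I.IsMatching μ' ∧ (∀ i, I.WeakImprove μ' μ i) ∧ ∃ i, I.StrictImprove μ' μ i

/-- `sig I μ r` is the number of rank-`r` edges of `μ` (as an integer). -/
noncomputable def sig (I : OSMInstance n) (μ : Finset (Fin n × Fin n)) (r : ℕ) : ℤ :=
  ((μ.filter (fun e => I.edgeRank e = r)).card : ℤ)

end OSMInstance

/-- Lexicographic comparison `f ≤ g` of the length-`len` tuples `(f 0, …, f (len-1))`
and `(g 0, …, g (len-1))`. -/
def LexLe (len : ℕ) (f g : ℕ → ℤ) : Prop :=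
  (∀ j < len, f j = g j) ∨ ∃ j < len, (∀ i < j, f i = g i) ∧ f j < g j

namespace OSMInstance

variable {n : ℕ}

/-- `μ` is a rank-maximal matching: it lexicographically maximizes `(s_1, …, s_n)`. -/
noncomputable def RankMaximal (I : OSMInstance n) (μ : Finset (Fin n × Fin n)) : Prop :=
  I.IsMatching μ ∧ ∀ μ', I.IsMatching μ' →
    LexLe n (fun j => I.sig μ' (j + 1)) (fun j => I.sig μ (j + 1))

/-- `μ` is a max-cardinality rank-maximal matching: it lexicographically maximizes
`(Σ_i s_i, s_1, …, s_n)`. -/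
noncomputable def MaxCardRankMaximal (I : OSMInstance n) (μ : Finset (Fin n × Fin n)) : Prop :=
  I.IsMatching μ ∧ ∀ μ', I.IsMatching μ' →
    LexLe (n + 1) (fun j => if j = 0 then (μ'.card : ℤ) else I.sig μ' j)
      (fun j => if j = 0 then (μ.card : ℤ) else I.sig μ j)

/-- `μ` is a fair matching: it lexicographically maximizes
`(Σ_i s_i, -s_n, -s_(n-1), …, -s_1)`. -/
noncomputable def FairMatching (I : OSMInstance n) (μ : Finset (Fin n × Fin n)) : Prop :=
  I.IsMatching μ ∧ ∀ μ', I.IsMatching μ' →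
    LexLe (n + 1) (fun j => if j = 0 then (μ'.card : ℤ) else -I.sig μ' (n + 1 - j))
      (fun j => if j = 0 then (μ.card : ℤ) else -I.sig μ (n + 1 - j))

end OSMInstance

/-- The priority vector for rank-maximal matchings: a rank-`r` edge gets weight
`n ^ (2 * (n - r + 1))`. -/
noncomputable def pRankMaximal (n : ℕ) : ℕ → ℝ :=
  fun r => (n : ℝ) ^ (2 * (n - r + 1))

/-- The priority vector for max-cardinality rank-maximal matchings: a rank-`r` edge gets
weight `n ^ (2 * n) + n ^ (2 * (n - r))`. -/
noncomputable def pMaxCardRankMaximal (n : ℕ) : ℕ → ℝ :=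
  fun r => (n : ℝ) ^ (2 * n) + (n : ℝ) ^ (2 * (n - r))

/-- The priority vector for fair matchings: a rank-`r` edge gets weight
`4 * n ^ (2 * n) - 2 * n ^ (r - 1)`. -/
noncomputable def pFairVec (n : ℕ) : ℕ → ℝ :=
  fun r => 4 * (n : ℝ) ^ (2 * n) - 2 * (n : ℝ) ^ (r - 1)

/-- The set `𝕡` of the three priority vectors of interest. -/
noncomputable def PrioritySet (n : ℕ) : Set (ℕ → ℝ) :=
  {pRankMaximal n, pMaxCardRankMaximal n, pFairVec n}

/-- The four matching properties considered: Pareto optimal, rank-maximal,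
max-cardinality rank-maximal, and fair. -/
inductive MatchProp where
  | po | rm | mcrm | fair

/-- `μ` satisfies the property `X` with respect to the instance `I`. -/
noncomputable def SatisfiesProp {n : ℕ} (X : MatchProp) (I : OSMInstance n)
    (μ : Finset (Fin n × Fin n)) : Prop :=
  match X with
  | .po => I.ParetoOptimal μ
  | .rm => I.RankMaximal μ
  | .mcrm => I.MaxCardRankMaximal μ
  | .fair => I.FairMatching μ

/-- The base-`B` value of a digit sequence satisfies Horner's recursion. -/
theorem sum_digits_succ (B : ℤ) (d : ℕ → ℤ) (k : ℕ) :
    ∑ i ∈ range (k + 1), d i * B ^ (k - i) =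
      B * ∑ i ∈ range k, d i * B ^ (k - 1 - i) + d k := by
  rw [sum_range_succ, mul_sum, Nat.sub_self, pow_zero, mul_one]
  congr 1
  refine sum_congr rfl fun i hi => ?_
  have hik : k - i = k - 1 - i + 1 := by
    have := mem_range.1 hi
    omega
  rw [hik, pow_succ]
  ring

/-- If the first nonzero signed digit is positive and all digits are smaller than the base in
absolute value, then the represented number is positive. -/
theorem sum_digits_pos {B : ℤ} {d : ℕ → ℤ} (hd : ∀ i, |d i| < B) {j : ℕ}
    (hzero : ∀ i < j, d i = 0) (hpos : 0 < d j) {k : ℕ} (hjk : j ≤ k) :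
    0 < ∑ i ∈ range (k + 1), d i * B ^ (k - i) := by
  induction k, hjk using Nat.le_induction with
  | base =>
    rw [sum_range_succ, sum_eq_zero fun i hi => by rw [hzero i (mem_range.1 hi), zero_mul]]
    simpa using hpos
  | succ k _ ih =>
    rw [sum_digits_succ]
    have hdk := abs_lt.1 (hd (k + 1))
    have hB : 0 < B := (abs_nonneg _).trans_lt (hd 0)
    simp only [Nat.add_sub_cancel]
    nlinarith

theorem sum_digits_lt_of_lex {B : ℤ} {f g : ℕ → ℤ} (hfg : ∀ i, |g i - f i| < B) {j k : ℕ}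
    (hjk : j ≤ k) (heq : ∀ i < j, f i = g i) (hlt : f j < g j) :
    ∑ i ∈ range (k + 1), f i * B ^ (k - i) < ∑ i ∈ range (k + 1), g i * B ^ (k - i) := by
  have h := sum_digits_pos (d := fun i => g i - f i) hfg
    (fun i hi => sub_eq_zero.2 (heq i hi).symm) (sub_pos.2 hlt) hjk
  simpa [sub_mul, sum_sub_distrib] using h

/-- Lexicographic comparison agrees with comparison of base-`B` values when digits differ by
less than `B`. -/
theorem lexLe_iff_sum_digits_le {B : ℤ} {f g : ℕ → ℤ} (hfg : ∀ i, |g i - f i| < B) (k : ℕ) :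
    LexLe (k + 1) f g ↔
      ∑ i ∈ range (k + 1), f i * B ^ (k - i) ≤ ∑ i ∈ range (k + 1), g i * B ^ (k - i) := by
  constructor
  · rintro (heq | ⟨j, hj, heq, hlt⟩)
    · exact (sum_congr rfl fun i hi => by rw [heq i (mem_range.1 hi)]).le
    · exact (sum_digits_lt_of_lex hfg (Nat.lt_succ_iff.1 hj) heq hlt).le
  · intro hle
    by_cases hall : ∀ j < k + 1, f j = g j
    · exact Or.inl hall
    · have hex : ∃ j, j < k + 1 ∧ f j ≠ g j := by simpa using hall
      obtain ⟨hj, hne⟩ := Nat.find_spec hex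
      have heq : ∀ i < Nat.find hex, f i = g i := fun i hi => by
        by_contra hi'
        exact Nat.find_min hex hi ⟨hi.trans hj, hi'⟩
      refine Or.inr ⟨_, hj, heq, lt_of_le_of_ne (not_lt.1 fun hlt => hle.not_gt ?_) hne⟩
      exact sum_digits_lt_of_lex (fun i => by rw [abs_sub_comm]; exact hfg i)
        (Nat.lt_succ_iff.1 hj) (fun i hi => (heq i hi).symm) hlt

namespace OSMInstance

variable {n : ℕ}

theorem edgeRank_pos (I : OSMInstance n) (e : Fin n × Fin n) : 0 < I.edgeRank e :=
  Nat.succ_pos _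

theorem edgeRank_le (I : OSMInstance n) (e : Fin n × Fin n) : I.edgeRank e ≤ n := by
  have hlt : ((I.accept e.1).filter fun h' => I.strictPref e.1 h' e.2).card <
      (univ : Finset (Fin n)).card := by
    refine card_lt_card (ssubset_univ_iff.2 fun h => ?_)
    have hmem := (mem_filter.1 (h ▸ mem_univ e.2)).2
    exact hmem.2 hmem.1
  rw [card_univ, Fintype.card_fin] at hlt
  exact hlt

theorem IsMatching.card_le {I : OSMInstance n} {μ : Finset (Fin n × Fin n)}
    (hμ : I.IsMatching μ) : μ.card ≤ n := by
  simpa using card_le_card_of_injOn Prod.fst (t := univ) (fun _ _ => mem_univ _)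
    (fun e he e' he' h => hμ.2.1 e he e' he' h)

/-- The tuple `(|μ|, s_1, s_2, …)` of a set of edges. -/
noncomputable def cardSig (I : OSMInstance n) (μ : Finset (Fin n × Fin n)) (j : ℕ) : ℤ :=
  if j = 0 then (μ.card : ℤ) else I.sig μ j

theorem cardSig_nonneg (I : OSMInstance n) (μ : Finset (Fin n × Fin n)) (j : ℕ) :
    0 ≤ I.cardSig μ j := by
  unfold cardSig sig
  split_ifs <;> positivity

theorem IsMatching.cardSig_le {I : OSMInstance n} {μ : Finset (Fin n × Fin n)}
    (hμ : I.IsMatching μ) (j : ℕ) : I.cardSig μ j ≤ n := by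
  have hcard := hμ.card_le
  have hfilter := card_filter_le μ fun e => I.edgeRank e = j
  unfold cardSig sig
  split_ifs <;> omega

/-- The total priority weight is the base-`n ^ 2` value of `(|μ|, s_1, …, s_n)`. -/
theorem weightSum_pMaxCardRankMaximal (I : OSMInstance n) (μ : Finset (Fin n × Fin n)) :
    weightSum (fun e => pMaxCardRankMaximal n (I.edgeRank e)) μ =
      ((∑ j ∈ range (n + 1), I.cardSig μ j * ((n : ℤ) ^ 2) ^ (n - j) : ℤ) : ℝ) := by
  have hmem : ∀ e ∈ μ, I.edgeRank e - 1 ∈ range n := fun e _ => by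
    have := I.edgeRank_pos e
    have := I.edgeRank_le e
    rw [mem_range]
    omega
  have hranks : ∑ e ∈ μ, (n : ℝ) ^ (2 * (n - I.edgeRank e)) =
      ∑ j ∈ range n, (I.sig μ (j + 1) : ℝ) * ((n : ℝ) ^ 2) ^ (n - (j + 1)) := by
    rw [← sum_fiberwise_of_maps_to hmem]
    refine sum_congr rfl fun j _ => ?_
    have hfilter : μ.filter (fun e => I.edgeRank e - 1 = j) =
        μ.filter (fun e => I.edgeRank e = j + 1) := by
      refine filter_congr fun e _ => ?_
      have := I.edgeRank_pos e
      omega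
    rw [hfilter, sum_congr rfl fun e he => by rw [(mem_filter.1 he).2], sum_const, nsmul_eq_mul,
      pow_mul]
    simp [sig]
  rw [sum_range_succ']
  simp only [weightSum, pMaxCardRankMaximal, sum_add_distrib, hranks, sum_const, nsmul_eq_mul]
  push_cast
  simp [cardSig, pow_mul, add_comm]

end OSMInstance

/-- a matching is max-cardinality rank-maximal iff it is a priority-`p`
matching for `p_j = n^(2n) + n^(2(n-j))`. -/
theorem maxCardRankMaximal_iff_priority {n : ℕ} (hn : 2 ≤ n) (I : OSMInstance n)
    (μ : Finset (Fin n × Fin n)) (hμ : I.IsMatching μ) :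
    I.MaxCardRankMaximal μ ↔ I.IsPriorityMatching (pMaxCardRankMaximal n) μ := by
  refine and_congr_right fun _ => forall₂_congr fun μ' hμ' => ?_
  rw [I.weightSum_pMaxCardRankMaximal, I.weightSum_pMaxCardRankMaximal, Int.cast_le]
  refine lexLe_iff_sum_digits_le (f := I.cardSig μ') (g := I.cardSig μ) (fun j => ?_) n
  have hn' : (2 : ℤ) ≤ n := by exact_mod_cast hn
  have := I.cardSig_nonneg μ j
  have := I.cardSig_nonneg μ' j
  have := hμ.cardSig_le j
  have := hμ'.cardSig_le j
  rw [abs_lt]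
  constructor <;> nlinarith
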